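/- Let S be a stream of N items and run the external-memory Misra-Gries structure with in-memory capacity M, growth factor r > 1, and L levels on S. Suppose φ > 1/M and that the item x = s_t has its ⌈φN⌉-th occurrence at time t ≤ N (i.e., a φ-event occurs at time t). Then, immediately after processing s_t, the in-memory level-0 count satisfies C_0[x] > (φ − 1/M)N. Consequently, an algorithm that triggers a query whenever some item's level-0 count is incremented past (φ − 1/M)N misses no φ-event. -/

import Mathlib

/-!
The external-memory Misra-Gries structure: a cascade of Misra-Gries tables
`C_0, …, C_{L−1}`, where level `i` has capacity `cap i = r^i·M`.
-/

/-- Inserting an item `x` into level `i` of the external-memory Misra-Gries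
structure; `gas` is the number of remaining levels (`L − i`). If the arriving
item has positive count at level `i`, increment it; otherwise, if fewer than
`cap i` items have positive count at level `i`, give it count 1; otherwise
decrement every positive count at level `i`, discard the arriving item and
recursively insert one instance of each decremented item into level `i + 1`. -/
noncomputable def emInsert {U : Type*} [Fintype U] [DecidableEq U] (cap : ℕ → ℕ) :
    ℕ → ℕ → (ℕ → U → ℕ) → U → (ℕ → U → ℕ)
  | 0, _, T, _ => T
  | gas + 1, i, T, x =>
    if 0 < T i x then
      Function.update T i (Function.update (T i) x (T i x + 1))
    else if (Finset.univ.filter fun y => 0 < T i y).card < cap i then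
      Function.update T i (Function.update (T i) x 1)
    else
      ((Finset.univ.filter fun y => 0 < T i y).toList).foldl
        (fun Tc y => emInsert cap gas (i + 1) Tc y)
        (Function.update T i fun y => T i y - 1)

/-- Running the external-memory Misra-Gries structure with `L` levels and
level capacities `cap` on the stream `S` (each stream item is inserted into
level `0`), starting from all-zero tables. -/
noncomputable def emRun {U : Type*} [Fintype U] [DecidableEq U]
    (cap : ℕ → ℕ) (L : ℕ) (S : List U) : ℕ → U → ℕ :=
  S.foldl (fun T x => emInsert cap L 0 T x) fun _ _ => 0

/-- `Ĉ_j[x]`: the consolidated count of `x` over levels `0, …, j`. -/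
def emHat {U : Type*} (T : ℕ → U → ℕ) (j : ℕ) (x : U) : ℕ :=
  ∑ i ∈ Finset.range (j + 1), T i x

/-!
Evictions from level `0` only affect the levels below it, so the in-memory table is an ordinary
Misra-Gries summary with `k = M` counters. For such a summary and any item `y`, every arrival
increases `(k + 1) · (f_y − C[y]) + ∑ z, C[z]` by at most `1`: an increment adds `1` to the sum,
while a decrement lowers the sum by at least `k` and raises `f_y − C[y]` by at most `1`, since
`C[y]` is already `0` if `y` is the arriving item. Hence `C[y]` lags behind `f_y` by at most
`N / (k + 1) < N / M`.
-/

section MisraGries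

variable {U : Type*} [Fintype U] [DecidableEq U]

/-- The update of a single Misra-Gries table `C` with `k` counters on the arrival of `x`. The two
ways in which `x` can be stored, in its own counter or in a free one, both add `1` to `C x`. -/
def misraGriesInsert (k : ℕ) (C : U → ℕ) (x : U) : U → ℕ :=
  if 0 < C x ∨ Finset.card {y | 0 < C y} < k then C + Pi.single x 1 else fun y => C y - 1

/-- The Misra-Gries summary of the stream `S` with `k` counters, as a table of counts: the
items without a counter have count `0`. -/
def misraGries (k : ℕ) (S : List U) : U → ℕ :=
  S.foldl (misraGriesInsert k) 0

theorem sum_sub_one_add_card_pos {ι : Type*} (s : Finset ι) (f : ι → ℕ) :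
    ∑ i ∈ s, (f i - 1) + (s.filter fun i => 0 < f i).card = ∑ i ∈ s, f i := by
  rw [Finset.card_filter, ← Finset.sum_add_distrib]
  refine Finset.sum_congr rfl fun i _ => ?_
  split_ifs <;> omega

-- The change of the potential `(k + 1) · (f_y − C[y]) + ∑ z, C[z]`, arranged to avoid subtraction.
theorem sum_misraGriesInsert_add_le (k : ℕ) (C : U → ℕ) (x y : U) :
    ∑ z, misraGriesInsert k C x z + (k + 1) * (C y + if y = x then 1 else 0) ≤
      ∑ z, C z + 1 + (k + 1) * misraGriesInsert k C x y := by
  rw [misraGriesInsert]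
  by_cases hstore : 0 < C x ∨ Finset.card {z | 0 < C z} < k
  · rw [if_pos hstore]
    simp only [Pi.add_apply, Pi.single_apply, Finset.sum_add_distrib, Finset.sum_ite_eq',
      Finset.mem_univ, if_true, le_refl]
  · obtain ⟨hx, hfull⟩ : C x = 0 ∧ k ≤ Finset.card {z | 0 < C z} := by simpa using hstore
    rw [if_neg hstore]
    have hlag : C y + (if y = x then 1 else 0) ≤ C y - 1 + 1 := by
      split_ifs with hyx
      · simp [hyx, hx]
      · omega
    calc ∑ z, (C z - 1) + (k + 1) * (C y + if y = x then 1 else 0)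
        ≤ ∑ z, (C z - 1) + (k + 1) * (C y - 1 + 1) := by gcongr
      _ = ∑ z, (C z - 1) + k + 1 + (k + 1) * (C y - 1) := by ring
      _ ≤ ∑ z, C z + 1 + (k + 1) * (C y - 1) := by
        rw [← sum_sub_one_add_card_pos Finset.univ C]
        gcongr

theorem mul_count_add_sum_misraGries_le (k : ℕ) (S : List U) (y : U) :
    (k + 1) * S.count y + ∑ z, misraGries k S z ≤ S.length + (k + 1) * misraGries k S y := by
  induction S using List.reverseRecOn with
  | nil => simp [misraGries]
  | append_singleton S x ih =>
    have hrun : misraGries k (S ++ [x]) = misraGriesInsert k (misraGries k S) x := by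
      simp only [misraGries, List.foldl_append, List.foldl_cons, List.foldl_nil]
    have hcount : (S ++ [x]).count y = S.count y + if y = x then 1 else 0 := by
      simp [List.count_append, List.count_singleton, eq_comm (a := y)]
    have hstep := sum_misraGriesInsert_add_le k (misraGries k S) x y
    rw [hrun, hcount, List.length_append, List.length_singleton]
    linarith

theorem count_le_misraGries_add (k : ℕ) (S : List U) (y : U) :
    (S.count y : ℝ) ≤ misraGries k S y + 1 / ((k : ℝ) + 1) * S.length := by
  have hnat : (k + 1) * S.count y ≤ S.length + (k + 1) * misraGries k S y :=
    (Nat.le_add_right _ _).trans (mul_count_add_sum_misraGries_le k S y)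
  have hreal : ((k : ℝ) + 1) * S.count y ≤ S.length + (k + 1) * misraGries k S y := mod_cast hnat
  field_simp
  linarith

theorem emInsert_apply_of_lt (cap : ℕ → ℕ) (gas i : ℕ) (T : ℕ → U → ℕ) (x : U) {j : ℕ}
    (hj : j < i) : emInsert cap gas i T x j = T j := by
  induction gas generalizing i T x with
  | zero => rw [emInsert]
  | succ gas ih =>
    rw [emInsert]
    split_ifs
    · exact Function.update_of_ne hj.ne _ _
    · exact Function.update_of_ne hj.ne _ _
    · exact List.foldlRecOn (motive := fun T' => T' j = T j) _ _ (Function.update_of_ne hj.ne _ _)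
        fun T' hT' y _ => (ih (i + 1) T' y (by omega)).trans hT'

theorem emInsert_succ_apply_self (cap : ℕ → ℕ) (gas i : ℕ) (T : ℕ → U → ℕ) (x : U) :
    emInsert cap (gas + 1) i T x i = misraGriesInsert (cap i) (T i) x := by
  have hstore : Function.update (T i) x (T i x + 1) = T i + Pi.single x 1 := by
    ext y
    obtain rfl | hyx := eq_or_ne y x <;> simp [*]
  rw [emInsert, misraGriesInsert]
  by_cases hpos : 0 < T i x
  · rw [if_pos hpos, if_pos (Or.inl hpos), Function.update_self, hstore]
  by_cases hfree : Finset.card {y | 0 < T i y} < cap i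
  · rw [if_neg hpos, if_pos hfree, if_pos (Or.inr hfree), Function.update_self, ← hstore,
      Nat.eq_zero_of_not_pos hpos]
  · rw [if_neg hpos, if_neg hfree, if_neg (not_or.mpr ⟨hpos, hfree⟩)]
    exact List.foldlRecOn (motive := fun T' => T' i = fun y => T i y - 1) _ _
      (Function.update_self _ _ _)
      fun T' hT' y _ => (emInsert_apply_of_lt cap gas (i + 1) T' y (by omega)).trans hT'

theorem emRun_zero_eq_misraGries (cap : ℕ → ℕ) {L : ℕ} (hL : 0 < L) (S : List U) :
    emRun cap L S 0 = misraGries (cap 0) S := by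
  obtain ⟨gas, rfl⟩ := Nat.exists_eq_add_of_lt hL
  exact (List.foldl_hom (fun T : ℕ → U → ℕ => T 0) fun T x =>
    (emInsert_succ_apply_self cap _ 0 T x).symm).symm

theorem emMisraGries_event_trigger_general (cap : ℕ → ℕ) {L : ℕ} (hL : 0 < L) (S : List U)
    (t : ℕ) (x : U) (φ : ℝ) (hφ : φ * S.length ≤ (S.take t).count x) :
    (φ - 1 / ((cap 0 : ℝ) + 1)) * S.length ≤ emRun cap L (S.take t) 0 x := by
  rw [emRun_zero_eq_misraGries cap hL, sub_mul, sub_le_iff_le_add]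
  calc φ * S.length ≤ (S.take t).count x := hφ
    _ ≤ misraGries (cap 0) (S.take t) x + 1 / ((cap 0 : ℝ) + 1) * (S.take t).length :=
      count_le_misraGries_add (cap 0) (S.take t) x
    _ ≤ misraGries (cap 0) (S.take t) x + 1 / ((cap 0 : ℝ) + 1) * S.length := by
      gcongr
      exact List.length_take_le' t S

end MisraGries

/-- Run the external-memory Misra-Gries structure with in-memory
capacity `M`, growth factor `r > 1` and `L` levels (level `i` having capacity
`r^i·M`, assumed integral) on a stream `S` of `N` items. Suppose `φ > 1/M` and
the item `x = s_t` has its `⌈φN⌉`-th occurrence at time `t ≤ N` (a `φ`-event at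
time `t`). Then, immediately after processing `s_t`, the in-memory level-0
count satisfies `C_0[x] > (φ − 1/M)·N`. (Consequently, an algorithm that
triggers a query whenever an item's level-0 count is incremented past
`(φ − 1/M)·N` misses no `φ`-event.) -/
theorem emMisraGries_event_trigger {U : Type*} [Fintype U] [DecidableEq U]
    (S : List U) (M : ℕ) (hM : 1 ≤ M) (r : ℝ) (hr : 1 < r)
    (L : ℕ) (hL : 0 < L)
    (cap : ℕ → ℕ) (hcap : ∀ i < L, (cap i : ℝ) = r ^ i * (M : ℝ))
    (φ : ℝ) (hφM : 1 / (M : ℝ) < φ) (hφ₁ : φ ≤ 1)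
    (t : ℕ) (ht : t < S.length) (x : U) (hx : S.get ⟨t, ht⟩ = x)
    (hevent : (S.take (t + 1)).count x = ⌈φ * (S.length : ℝ)⌉₊) :
    (φ - 1 / (M : ℝ)) * (S.length : ℝ) < (emRun cap L (S.take (t + 1)) 0 x : ℝ) := by
  have hcap₀ : cap 0 = M := by simpa using hcap 0 hL
  have hN : (0 : ℝ) < S.length := mod_cast Nat.zero_lt_of_lt ht
  calc (φ - 1 / (M : ℝ)) * S.length < (φ - 1 / ((M : ℝ) + 1)) * S.length := by
        gcongr
        linarith
    _ ≤ emRun cap L (S.take (t + 1)) 0 x :=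
        hcap₀ ▸ emMisraGries_event_trigger_general cap hL S (t + 1) x φ (Nat.ceil_le.mp hevent.ge)
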